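/- arXiv:1810.08486 — 2 statements merged into one kernel-verified Lean document; each statement's English description precedes it below -/
import Mathlib

section
/- A class of connections with the same constant curvature as ∇⁰ (Theorem 'thm:YM-connection'(a)): let g₁, g₂ : ℝ → ℝ be differentiable functions with g₁(y+1) = g₁(y), g₁(y − 2pν) = g₁(y) and g₂(x − 2pμ) = g₂(x) for all p ∈ ℤ, and define operators on module functions by (A_X f)(x,y) = (∇⁰_X f)(x,y) − i·g₁(y)·f(x,y), (A_Y f)(x,y) = (∇⁰_Y f)(x,y) − i·g₂(x)·f(x,y), and A_Z = ∇⁰_Z. Then for every module function f: (A_X A_Y − A_Y A_X − c·A_Z) f = 0, (A_X A_Z − A_Z A_X) f = 0, and (A_Y A_Z − A_Z A_Y) f = −(πi/μ)·f. (Hence the perturbed connection ∇ = ∇⁰ + H, with H_X = i·g₁·δ₀, H_Y = i·g₂·δ₀, H_Z = 0, has the same constant curvature Θ_∇(X,Y) = Θ_∇(X,Z) = 0, Θ_∇(Y,Z) = (πi/μ)·Id_E as ∇⁰.) -/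
noncomputable section

/-- `e(t) = exp(2πit)`. -/
def e2 (t : ℝ) : ℂ := Complex.exp (2 * Real.pi * Complex.I * t)

/-- Partial derivative in the first variable. -/
def pdX (f : ℝ × ℝ → ℂ) (x y : ℝ) : ℂ := deriv (fun t => f (t, y)) x

/-- Partial derivative in the second variable. -/
def pdY (f : ℝ × ℝ → ℂ) (x y : ℝ) : ℂ := deriv (fun t => f (x, t)) y

/-- A module function: smooth, 1-periodic in the second variable, and supported in
`K × ℝ` for some compact `K ⊆ ℝ`. -/
def IsModuleFn (f : ℝ × ℝ → ℂ) : Prop :=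
  ContDiff ℝ (⊤ : ℕ∞) f ∧ (∀ x y : ℝ, f (x, y + 1) = f (x, y)) ∧
    ∃ K : Set ℝ, IsCompact K ∧ ∀ x y : ℝ, x ∉ K → f (x, y) = 0

/-- `(∇⁰_X f)(x,y) = −∂f/∂y(x,y) + (πci/(2μ))·x²·f(x,y)`. -/
def n0X (c : ℕ) (μ : ℝ) (f : ℝ × ℝ → ℂ) : ℝ × ℝ → ℂ := fun q =>
  -pdY f q.1 q.2 + (Real.pi : ℂ) * (c : ℂ) * Complex.I / (2 * (μ : ℂ)) * (q.1 : ℂ) ^ 2 * f q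

/-- `(∇⁰_Y f)(x,y) = −∂f/∂x(x,y)`. -/
def n0Y (f : ℝ × ℝ → ℂ) : ℝ × ℝ → ℂ := fun q => -pdX f q.1 q.2

/-- `(∇⁰_Z f)(x,y) = (πix/μ)·f(x,y)`. -/
def n0Z (μ : ℝ) (f : ℝ × ℝ → ℂ) : ℝ × ℝ → ℂ := fun q =>
  (Real.pi : ℂ) * Complex.I * (q.1 : ℂ) / (μ : ℂ) * f q

/-- A smooth algebra element of `D^c_{μν}`, presented as a `ℤ`-indexed family of smooth
functions on `ℝ × ℝ`: smooth, 1-periodic in `y`, finitely supported in the `ℤ`-variable,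
and `ρ`-invariant. -/
def IsAlgElem (c : ℕ) (ν : ℝ) (Φ : ℤ → ℝ × ℝ → ℂ) : Prop :=
  (∀ p : ℤ, ContDiff ℝ (⊤ : ℕ∞) (Φ p)) ∧
  (∀ (p : ℤ) (x y : ℝ), Φ p (x, y + 1) = Φ p (x, y)) ∧
  {p : ℤ | Φ p ≠ 0}.Finite ∧
  ∀ (p k : ℤ) (x y : ℝ),
    e2 (-((c : ℝ) * (k : ℝ) * (p : ℝ) * (y - (p : ℝ) * ν))) * Φ p (x + (k : ℝ), y) = Φ p (x, y)

/-- The right action of `Φ ∈ D^c_{μν}` on the module function `f`: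
`(f·Φ)(x,y) = Σ_q f(x+2qμ, y+2qν)·conj(Φ(x+2qμ, y+2qν, q))`. -/
def rAct (μ ν : ℝ) (f : ℝ × ℝ → ℂ) (Φ : ℤ → ℝ × ℝ → ℂ) : ℝ × ℝ → ℂ := fun q =>
  ∑ᶠ p : ℤ, f (q.1 + 2 * (p : ℝ) * μ, q.2 + 2 * (p : ℝ) * ν) *
    (starRingEnd ℂ) (Φ p (q.1 + 2 * (p : ℝ) * μ, q.2 + 2 * (p : ℝ) * ν))

/-- `(δ_X Φ)(x,y,p) = 2πicp(x−pμ)·Φ(x,y,p) − ∂Φ/∂y(x,y,p)`. -/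
def dAlgX (c : ℕ) (μ : ℝ) (Φ : ℤ → ℝ × ℝ → ℂ) : ℤ → ℝ × ℝ → ℂ := fun p q =>
  2 * (Real.pi : ℂ) * Complex.I * (c : ℂ) * (p : ℂ) * ((q.1 : ℂ) - (p : ℂ) * (μ : ℂ)) * Φ p q
    - pdY (Φ p) q.1 q.2

/-- `(δ_Y Φ)(x,y,p) = −∂Φ/∂x(x,y,p)`. -/
def dAlgY (Φ : ℤ → ℝ × ℝ → ℂ) : ℤ → ℝ × ℝ → ℂ := fun p q => -pdX (Φ p) q.1 q.2

/-- `(δ_Z Φ)(x,y,p) = 2πip·Φ(x,y,p)`. -/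
def dAlgZ (Φ : ℤ → ℝ × ℝ → ℂ) : ℤ → ℝ × ℝ → ℂ := fun p q =>
  2 * (Real.pi : ℂ) * Complex.I * (p : ℂ) * Φ p q

/-- The `D^c_{μν}`-valued inner product
`⟨f,g⟩(x,y,p) = Σ_k e(−ckp(y−pν))·f(x+k,y)·conj(g(x−2pμ+k, y−2pν))`. -/
def ipD (c : ℕ) (μ ν : ℝ) (f g : ℝ × ℝ → ℂ) : ℤ → ℝ × ℝ → ℂ := fun p q =>
  ∑ᶠ k : ℤ, e2 (-((c : ℝ) * (k : ℝ) * (p : ℝ) * (q.2 - (p : ℝ) * ν))) *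
    f (q.1 + (k : ℝ), q.2) *
    (starRingEnd ℂ) (g (q.1 - 2 * (p : ℝ) * μ + (k : ℝ), q.2 - 2 * (p : ℝ) * ν))

/-!
The operators `A_X = −∂_y + φ` and `A_Y = −∂_x + ψ` are first-order with scalar potentials `φ`, `ψ`,
and `A_Z` is multiplication by `χ = πix/μ`. On `C²` functions the second derivatives and the
first-order cross terms cancel in the commutators, which are therefore multiplication operators:
`[−∂_v + φ, −∂_w + ψ] = ∂_w φ − ∂_v ψ` and `[−∂_v + φ, χ] = −∂_v χ`. Only `∂_x φ` and `∂_y ψ` enter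
the curvature, and these vanish on the perturbations, a function of `y` in `φ` and of `x` in `ψ`.
-/

open Complex

section LineDeriv

variable {𝕜 E F : Type*} [NontriviallyNormedField 𝕜] [NormedAddCommGroup F] [NormedSpace 𝕜 F]

section Coordinates

variable [AddCommGroup E] [Module 𝕜 E] {f' : F}

theorem hasLineDerivAt_one_zero_iff {f : 𝕜 × E → F} {q : 𝕜 × E} :
    HasLineDerivAt 𝕜 f f' q (1, 0) ↔ HasDerivAt (fun t => f (t, q.2)) f' q.1 := by
  simp [HasLineDerivAt, Prod.add_def, hasDerivAt_iff_hasFDerivAt,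
    hasFDerivAt_comp_add_left (f := fun t => f (t, q.2))]

theorem hasLineDerivAt_zero_one_iff {f : E × 𝕜 → F} {q : E × 𝕜} :
    HasLineDerivAt 𝕜 f f' q (0, 1) ↔ HasDerivAt (fun t => f (q.1, t)) f' q.2 := by
  simp [HasLineDerivAt, Prod.add_def, hasDerivAt_iff_hasFDerivAt,
    hasFDerivAt_comp_add_left (f := fun t => f (q.1, t))]

theorem lineDeriv_one_zero (f : 𝕜 × E → F) (q : 𝕜 × E) :
    lineDeriv 𝕜 f q (1, 0) = deriv (fun t => f (t, q.2)) q.1 := by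
  simp [lineDeriv, Prod.add_def, deriv_comp_const_add (fun t => f (t, q.2))]

theorem lineDeriv_zero_one (f : E × 𝕜 → F) (q : E × 𝕜) :
    lineDeriv 𝕜 f q (0, 1) = deriv (fun t => f (q.1, t)) q.2 := by
  simp [lineDeriv, Prod.add_def, deriv_comp_const_add (fun t => f (q.1, t))]

end Coordinates

theorem hasLineDerivAt_mul {𝔸 : Type*} [NormedRing 𝔸] [NormedAlgebra 𝕜 𝔸] [AddCommGroup E]
    [Module 𝕜 E] {f g : E → 𝔸} {f' g' : 𝔸} {x v : E}
    (hf : HasLineDerivAt 𝕜 f f' x v) (hg : HasLineDerivAt 𝕜 g g' x v) :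
    HasLineDerivAt 𝕜 (f * g) (f' * g x + f x * g') x v := by
  simpa [HasLineDerivAt] using HasDerivAt.fun_mul hf hg

variable [NormedAddCommGroup E] [NormedSpace 𝕜 E] {f : E → F} {x : E}

theorem hasLineDerivAt_lineDeriv (hf : ContDiffAt 𝕜 2 f x) (v w : E) :
    HasLineDerivAt 𝕜 (fun z => lineDeriv 𝕜 f z v) (fderiv 𝕜 (fderiv 𝕜 f) x w v) x w := by
  have hfderiv : DifferentiableAt 𝕜 (fderiv 𝕜 f) x :=
    (hf.fderiv_right (m := 1) (by norm_num)).differentiableAt one_ne_zero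
  have hline : (fun z => lineDeriv 𝕜 f z v) =ᶠ[nhds x] fun z => fderiv 𝕜 f z v := by
    filter_upwards [hf.eventually (by simp)] with z hz
    exact (hz.differentiableAt two_ne_zero).lineDeriv_eq_fderiv
  have happly := hfderiv.hasFDerivAt.clm_apply (hasFDerivAt_const v x)
  simpa using (happly.hasLineDerivAt w).congr_of_eventuallyEq hline

end LineDeriv

theorem lineDeriv_lineDeriv_comm {E F : Type*} [NormedAddCommGroup E] [NormedSpace ℝ E]
    [NormedAddCommGroup F] [NormedSpace ℝ F] {f : E → F} {x : E} (hf : ContDiffAt ℝ 2 f x)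
    (v w : E) :
    lineDeriv ℝ (fun z => lineDeriv ℝ f z v) x w =
      lineDeriv ℝ (fun z => lineDeriv ℝ f z w) x v := by
  rw [(hasLineDerivAt_lineDeriv hf v w).lineDeriv, (hasLineDerivAt_lineDeriv hf w v).lineDeriv]
  exact hf.isSymmSndFDerivAt (by simp) w v

section CovDeriv

variable {E 𝔸 : Type*} [NormedAddCommGroup E] [NormedSpace ℝ E]

/-- The covariant derivative `−∂_v + φ` in the direction `v` with scalar potential `φ`. The minus
sign follows the convention of `n0X` and `n0Y`. -/
def covDeriv [NormedRing 𝔸] [NormedAlgebra ℝ 𝔸] (v : E) (φ f : E → 𝔸) : E → 𝔸 :=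
  fun z => -lineDeriv ℝ f z v + φ z * f z

theorem lineDeriv_covDeriv [NormedRing 𝔸] [NormedAlgebra ℝ 𝔸] {φ f : E → 𝔸} {φ' : 𝔸} {x v w : E}
    (hf : ContDiffAt ℝ 2 f x) (hφ : HasLineDerivAt ℝ φ φ' x w) :
    lineDeriv ℝ (covDeriv v φ f) x w =
      -lineDeriv ℝ (fun z => lineDeriv ℝ f z v) x w + (φ' * f x + φ x * lineDeriv ℝ f x w) := by
  have hsecond := (hasLineDerivAt_lineDeriv hf v w).lineDifferentiableAt.hasLineDerivAt
  have hfirst := (hf.differentiableAt two_ne_zero).lineDifferentiableAt (v := w).hasLineDerivAt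
  exact HasLineDerivAt.lineDeriv
    (HasDerivAt.add (HasDerivAt.neg hsecond) (hasLineDerivAt_mul hφ hfirst))

variable [NormedCommRing 𝔸] [NormedAlgebra ℝ 𝔸] {f φ ψ χ : E → 𝔸} {φ' ψ' χ' : 𝔸} {x v w : E}

theorem covDeriv_covDeriv_sub_covDeriv_covDeriv (hf : ContDiffAt ℝ 2 f x)
    (hφ : HasLineDerivAt ℝ φ φ' x w) (hψ : HasLineDerivAt ℝ ψ ψ' x v) :
    covDeriv v φ (covDeriv w ψ f) x - covDeriv w ψ (covDeriv v φ f) x = (φ' - ψ') * f x := by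
  change -lineDeriv ℝ (covDeriv w ψ f) x v + φ x * covDeriv w ψ f x -
    (-lineDeriv ℝ (covDeriv v φ f) x w + ψ x * covDeriv v φ f x) = _
  rw [lineDeriv_covDeriv hf hφ, lineDeriv_covDeriv hf hψ, lineDeriv_lineDeriv_comm hf w v]
  simp only [covDeriv]
  ring

theorem covDeriv_mul_sub_mul_covDeriv (hf : LineDifferentiableAt ℝ f x v)
    (hχ : HasLineDerivAt ℝ χ χ' x v) :
    covDeriv v φ (χ * f) x - χ x * covDeriv v φ f x = -χ' * f x := by
  simp only [covDeriv, (hasLineDerivAt_mul hχ hf.hasLineDerivAt).lineDeriv, Pi.mul_apply]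
  ring

end CovDeriv

section Potentials

/-- The potential `φ` of `A_X = −∂_y + φ`, that is of `∇⁰_X` perturbed by `−i·g(y)`. -/
def potentialX (c : ℕ) (μ : ℝ) (g : ℝ → ℂ) (q : ℝ × ℝ) : ℂ :=
  Real.pi * c * I / (2 * μ) * (q.1 : ℂ) ^ 2 - I * g q.2

/-- The potential `ψ` of `A_Y = −∂_x + ψ`, that is of `∇⁰_Y` perturbed by `−i·g(x)`. -/
def potentialY (g : ℝ → ℂ) (q : ℝ × ℝ) : ℂ := -(I * g q.1)

/-- The function `χ` by which `A_Z = ∇⁰_Z` multiplies. -/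
def potentialZ (μ : ℝ) (q : ℝ × ℝ) : ℂ := Real.pi * I * q.1 / μ

variable (c : ℕ) (μ : ℝ) (g : ℝ → ℂ) (q : ℝ × ℝ)

theorem n0X_sub_eq_covDeriv :
    (fun f q => n0X c μ f q - I * g q.2 * f q) = covDeriv (0, 1) (potentialX c μ g) := by
  funext f q
  simp only [n0X, pdY, covDeriv, potentialX, lineDeriv_zero_one]
  ring

theorem n0Y_sub_eq_covDeriv :
    (fun f q => n0Y f q - I * g q.1 * f q) = covDeriv (1, 0) (potentialY g) := by
  funext f q
  simp only [n0Y, pdX, covDeriv, potentialY, lineDeriv_one_zero]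
  ring

theorem n0Z_eq_mul : n0Z μ = fun f => potentialZ μ * f := rfl

theorem hasLineDerivAt_potentialX {μ : ℝ} (hμ : μ ≠ 0) :
    HasLineDerivAt ℝ (potentialX c μ g) (c * potentialZ μ q) q (1, 0) := by
  have hμ' : (μ : ℂ) ≠ 0 := ofReal_ne_zero.2 hμ
  have hsq : HasDerivAt (fun t : ℝ => (t : ℂ) ^ 2) (2 * q.1) q.1 := by
    simpa using (hasDerivAt_id q.1).ofReal_comp.fun_pow 2
  refine hasLineDerivAt_one_zero_iff.2 <|
    ((hsq.const_mul (Real.pi * c * I / (2 * μ))).sub_const (I * g q.2)).congr_deriv ?_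
  simp only [potentialZ]
  field_simp

theorem hasLineDerivAt_potentialY : HasLineDerivAt ℝ (potentialY g) 0 q (0, 1) :=
  hasLineDerivAt_zero_one_iff.2 <| hasDerivAt_const q.2 (potentialY g q)

theorem hasLineDerivAt_potentialZ_zero_one : HasLineDerivAt ℝ (potentialZ μ) 0 q (0, 1) :=
  hasLineDerivAt_zero_one_iff.2 <| hasDerivAt_const q.2 (potentialZ μ q)

theorem hasLineDerivAt_potentialZ_one_zero :
    HasLineDerivAt ℝ (potentialZ μ) (Real.pi * I / μ) q (1, 0) := by
  have hlinear : HasDerivAt (fun t : ℝ => Real.pi * I * (t : ℂ) / μ) (Real.pi * I / μ) q.1 := by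
    simpa using ((hasDerivAt_id q.1).ofReal_comp.const_mul (Real.pi * I)).div_const (μ : ℂ)
  exact hasLineDerivAt_one_zero_iff.2 hlinear

end Potentials

theorem statement8_general (c : ℕ) {μ : ℝ} (hμ : μ ≠ 0) (g₁ g₂ : ℝ → ℂ)
    {AX AY AZ : (ℝ × ℝ → ℂ) → ℝ × ℝ → ℂ}
    (hAX : AX = fun f q => n0X c μ f q - I * g₁ q.2 * f q)
    (hAY : AY = fun f q => n0Y f q - I * g₂ q.1 * f q)
    (hAZ : AZ = n0Z μ) {f : ℝ × ℝ → ℂ} (hf : ContDiff ℝ 2 f) :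
    (∀ q : ℝ × ℝ, AX (AY f) q - AY (AX f) q - c * AZ f q = 0) ∧
    (∀ q : ℝ × ℝ, AX (AZ f) q - AZ (AX f) q = 0) ∧
    (∀ q : ℝ × ℝ, AY (AZ f) q - AZ (AY f) q = -(Real.pi * I / μ) * f q) := by
  have hline (q v : ℝ × ℝ) : LineDifferentiableAt ℝ f q v :=
    (hf.differentiable two_ne_zero q).lineDifferentiableAt
  rw [n0X_sub_eq_covDeriv] at hAX
  rw [n0Y_sub_eq_covDeriv] at hAY
  rw [n0Z_eq_mul] at hAZ
  subst hAX hAY hAZ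
  refine ⟨fun q => ?_, fun q => ?_, fun q => ?_⟩
  · rw [covDeriv_covDeriv_sub_covDeriv_covDeriv hf.contDiffAt
      (hasLineDerivAt_potentialX c g₁ q hμ) (hasLineDerivAt_potentialY g₂ q)]
    simp only [Pi.mul_apply]
    ring
  · simpa using
      covDeriv_mul_sub_mul_covDeriv (hline q _) (hasLineDerivAt_potentialZ_zero_one μ q)
  · exact covDeriv_mul_sub_mul_covDeriv (hline q _) (hasLineDerivAt_potentialZ_one_zero μ q)

/-- Theorem `thm:YM-connection`(a): with `g₁, g₂ : ℝ → ℝ` differentiable,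
`g₁(y+1) = g₁(y)`, `g₁(y−2pν) = g₁(y)`, `g₂(x−2pμ) = g₂(x)` for all `p ∈ ℤ`, the operators
`A_X f = ∇⁰_X f − i·g₁(y)·f`, `A_Y f = ∇⁰_Y f − i·g₂(x)·f`, `A_Z = ∇⁰_Z` satisfy
`(A_XA_Y − A_YA_X − c·A_Z) f = 0`, `(A_XA_Z − A_ZA_X) f = 0`, and
`(A_YA_Z − A_ZA_Y) f = −(πi/μ)·f` for every module function `f`; i.e. the perturbed connection
has the same constant curvature as `∇⁰`. -/
theorem statement8 (c : ℕ) (hc : 0 < c) (μ ν : ℝ) (hμ : μ ≠ 0) (hν : ν ≠ 0)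
    (g₁ g₂ : ℝ → ℝ) (hg₁d : Differentiable ℝ g₁) (hg₂d : Differentiable ℝ g₂)
    (hg₁per : ∀ y : ℝ, g₁ (y + 1) = g₁ y)
    (hg₁inv : ∀ (p : ℤ) (y : ℝ), g₁ (y - 2 * (p : ℝ) * ν) = g₁ y)
    (hg₂inv : ∀ (p : ℤ) (x : ℝ), g₂ (x - 2 * (p : ℝ) * μ) = g₂ x)
    (AX AY AZ : (ℝ × ℝ → ℂ) → ℝ × ℝ → ℂ)
    (hAX : AX = fun f q => n0X c μ f q - Complex.I * (g₁ q.2 : ℂ) * f q)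
    (hAY : AY = fun f q => n0Y f q - Complex.I * (g₂ q.1 : ℂ) * f q)
    (hAZ : AZ = n0Z μ)
    (f : ℝ × ℝ → ℂ) (hf : IsModuleFn f) :
    (∀ q : ℝ × ℝ, AX (AY f) q - AY (AX f) q - (c : ℂ) * AZ f q = 0) ∧
    (∀ q : ℝ × ℝ, AX (AZ f) q - AZ (AX f) q = 0) ∧
    (∀ q : ℝ × ℝ, AY (AZ f) q - AZ (AY f) q
      = -((Real.pi : ℂ) * Complex.I / (μ : ℂ)) * f q) := by
  exact statement8_general c hμ (fun y => g₁ y) (fun x => g₂ x) hAX hAY hAZ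
    (contDiff_infty.1 hf.1 2)

end
end

section
/- Curvature of the Z-perturbed connection (Theorem 'thm:min-but-nc'(a)): let α be a nonzero real number and define operators on module functions by B_X = ∇⁰_X, B_Y = ∇⁰_Y, and (B_Z f)(x,y) = (∇⁰_Z f)(x,y) − i·cos(απx/μ)·f(x,y). Then for every module function f and all (x,y): ((B_X B_Y − B_Y B_X − c·B_Z) f)(x,y) = c·i·cos(απx/μ)·f(x,y), ((B_X B_Z − B_Z B_X) f)(x,y) = 0, and ((B_Y B_Z − B_Z B_Y) f)(x,y) = (−πi/μ − i·(απ/μ)·sin(απx/μ))·f(x,y). In particular the curvature operator B_X B_Y − B_Y B_X − c·B_Z is nonzero (so Θ(X,Y) ≠ 0 and the curvature is not constant). -/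
noncomputable section

/-- The `Z`-perturbed operator `B_Z f = ∇⁰_Z f − i·cos(απx/μ)·f`. -/
def opBZ (μ α : ℝ) (f : ℝ × ℝ → ℂ) : ℝ × ℝ → ℂ := fun q =>
  n0Z μ f q - Complex.I * (Real.cos (α * Real.pi * q.1 / μ) : ℂ) * f q

/-!
Multiplication by a function `φ` of `x` alone commutes with `∂/∂y`, and its commutator with
`−∂/∂x` is multiplication by `−φ'`. Every curvature entry is an instance of this, since
`∇⁰_X = −∂/∂y + φ(x)` with `φ(x) = πcix²/(2μ)`, `∇⁰_Y = −∂/∂x`, and `B_Z` is itself multiplication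
by a function of `x`. The mixed partials in `[∇⁰_X, ∇⁰_Y]` cancel and leave
`φ'(x) = c·(πix/μ)`, so `∇⁰` has no `(X, Y)`-curvature and `B` has exactly the contribution of
the perturbation of `∇⁰_Z`. A bump function at `x = 0`, where the cosine is `1`, shows that this
contribution is not zero.
-/

section PartialDerivatives

variable {f : ℝ × ℝ → ℂ} {x y : ℝ}

theorem hasDerivAt_fst_of_differentiableAt (hf : DifferentiableAt ℝ f (x, y)) :
    HasDerivAt (fun t => f (t, y)) (fderiv ℝ f (x, y) (1, 0)) x :=
  hf.hasFDerivAt.comp_hasDerivAt x ((hasDerivAt_id x).prodMk (hasDerivAt_const x y))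

theorem hasDerivAt_snd_of_differentiableAt (hf : DifferentiableAt ℝ f (x, y)) :
    HasDerivAt (fun t => f (x, t)) (fderiv ℝ f (x, y) (0, 1)) y :=
  hf.hasFDerivAt.comp_hasDerivAt y ((hasDerivAt_const y x).prodMk (hasDerivAt_id y))

theorem pdX_eq_fderiv (hf : DifferentiableAt ℝ f (x, y)) :
    pdX f x y = fderiv ℝ f (x, y) (1, 0) :=
  (hasDerivAt_fst_of_differentiableAt hf).deriv

theorem pdY_eq_fderiv (hf : DifferentiableAt ℝ f (x, y)) :
    pdY f x y = fderiv ℝ f (x, y) (0, 1) :=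
  (hasDerivAt_snd_of_differentiableAt hf).deriv

theorem differentiable_fderiv_of_contDiff_two (hf : ContDiff ℝ 2 f) :
    Differentiable ℝ (fderiv ℝ f) :=
  (hf.fderiv_right (m := 1) (by norm_num)).differentiable one_ne_zero

theorem differentiable_pdY (hf : ContDiff ℝ 2 f) :
    Differentiable ℝ (fun q : ℝ × ℝ => pdY f q.1 q.2) := by
  have pdY_eq : (fun q : ℝ × ℝ => pdY f q.1 q.2) = fun q => fderiv ℝ f q (0, 1) :=
    funext fun q => pdY_eq_fderiv (hf.differentiable two_ne_zero q)
  rw [pdY_eq]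
  exact (differentiable_fderiv_of_contDiff_two hf).clm_apply (differentiable_const _)

theorem pdY_pdX_eq_pdX_pdY (hf : ContDiff ℝ 2 f) :
    pdY (fun q => pdX f q.1 q.2) x y = pdX (fun q => pdY f q.1 q.2) x y := by
  have hf_diff : Differentiable ℝ f := hf.differentiable two_ne_zero
  have hf_fderiv : DifferentiableAt ℝ (fderiv ℝ f) (x, y) :=
    differentiable_fderiv_of_contDiff_two hf (x, y)
  have fderiv_apply (v w : ℝ × ℝ) :
      fderiv ℝ (fun q => fderiv ℝ f q v) (x, y) w = fderiv ℝ (fderiv ℝ f) (x, y) w v := by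
    simp [fderiv_clm_apply hf_fderiv (differentiableAt_const v)]
  have symm : IsSymmSndFDerivAt ℝ f (x, y) := hf.contDiffAt.isSymmSndFDerivAt (by simp)
  simp only [pdX_eq_fderiv (hf_diff _), pdY_eq_fderiv (hf_diff _)]
  calc pdY (fun q => fderiv ℝ f q (1, 0)) x y
      = fderiv ℝ (fderiv ℝ f) (x, y) (0, 1) (1, 0) := by
        rw [pdY_eq_fderiv (hf_fderiv.clm_apply (differentiableAt_const _)), fderiv_apply]
    _ = fderiv ℝ (fderiv ℝ f) (x, y) (1, 0) (0, 1) := symm.eq _ _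
    _ = pdX (fun q => fderiv ℝ f q (0, 1)) x y := by
        rw [pdX_eq_fderiv (hf_fderiv.clm_apply (differentiableAt_const _)), fderiv_apply]

end PartialDerivatives

/-- The operator of multiplication by a function `φ` of the first variable. -/
def mulFst (φ : ℝ → ℂ) (f : ℝ × ℝ → ℂ) : ℝ × ℝ → ℂ := fun q => φ q.1 * f q

section MulFst

variable {φ : ℝ → ℂ} {φ' : ℂ} {f : ℝ × ℝ → ℂ} {x y : ℝ}

theorem pdX_mulFst (hφ : HasDerivAt φ φ' x) (hf : DifferentiableAt ℝ (fun t => f (t, y)) x) :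
    pdX (mulFst φ f) x y = φ' * f (x, y) + φ x * pdX f x y :=
  (hφ.mul hf.hasDerivAt).deriv

theorem pdY_mulFst (φ : ℝ → ℂ) (f : ℝ × ℝ → ℂ) (x y : ℝ) :
    pdY (mulFst φ f) x y = φ x * pdY f x y :=
  deriv_const_mul_field (φ x)

theorem n0Y_mulFst_sub_mulFst_n0Y (hφ : HasDerivAt φ φ' x)
    (hf : DifferentiableAt ℝ (fun t => f (t, y)) x) :
    n0Y (mulFst φ f) (x, y) - mulFst φ (n0Y f) (x, y) = -φ' * f (x, y) := by
  simp only [n0Y, pdX_mulFst hφ hf]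
  simp only [mulFst, n0Y]
  ring

theorem n0X_mulFst (c : ℕ) (μ : ℝ) (φ : ℝ → ℂ) (f : ℝ × ℝ → ℂ) :
    n0X c μ (mulFst φ f) = mulFst φ (n0X c μ f) := by
  ext q
  simp only [n0X, pdY_mulFst]
  simp only [mulFst, n0X]
  ring

end MulFst

/-- The potential `πcix²/(2μ)` in `∇⁰_X`, as a function of `x`. -/
def n0XPotential (c : ℕ) (μ x : ℝ) : ℂ :=
  (Real.pi : ℂ) * (c : ℂ) * Complex.I / (2 * (μ : ℂ)) * (x : ℂ) ^ 2

theorem hasDerivAt_n0XPotential (c : ℕ) (μ x : ℝ) :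
    HasDerivAt (n0XPotential c μ) (c * ((Real.pi : ℂ) * Complex.I * (x : ℂ) / (μ : ℂ))) x := by
  have square : HasDerivAt (fun t : ℝ => (t : ℂ) ^ 2) (2 * (x : ℂ)) x := by
    simpa using (hasDerivAt_id x).ofReal_comp.fun_pow 2
  exact (square.const_mul _).congr_deriv (by ring)

/-- The function of `x` by which the perturbed operator `B_Z` multiplies. -/
def opBZSymbol (μ α x : ℝ) : ℂ :=
  (Real.pi : ℂ) * Complex.I * (x : ℂ) / (μ : ℂ)
    - Complex.I * (Real.cos (α * Real.pi * x / μ) : ℂ)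

theorem opBZ_eq_mulFst (μ α : ℝ) : opBZ μ α = mulFst (opBZSymbol μ α) := by
  ext f q
  simp only [opBZ, n0Z, mulFst, opBZSymbol]
  ring

theorem hasDerivAt_opBZSymbol (μ α x : ℝ) :
    HasDerivAt (opBZSymbol μ α)
      ((Real.pi : ℂ) * Complex.I / (μ : ℂ)
        + Complex.I * ((α * Real.pi / μ : ℝ) : ℂ) * (Real.sin (α * Real.pi * x / μ) : ℂ)) x := by
  have linear : HasDerivAt (fun t : ℝ => (Real.pi : ℂ) * Complex.I * (t : ℂ) / (μ : ℂ))
      ((Real.pi : ℂ) * Complex.I / (μ : ℂ)) x := by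
    simpa using ((hasDerivAt_id x).ofReal_comp.const_mul _).div_const (μ : ℂ)
  have cosine : HasDerivAt (fun t : ℝ => (Real.cos (α * Real.pi * t / μ) : ℂ))
      ((-Real.sin (α * Real.pi * x / μ) * (α * Real.pi / μ) : ℝ) : ℂ) x := by
    simpa using (((hasDerivAt_id x).const_mul (α * Real.pi)).div_const μ).cos.ofReal_comp
  refine (linear.sub (cosine.const_mul Complex.I)).congr_deriv ?_
  push_cast
  ring

theorem pdX_n0X (c : ℕ) (μ : ℝ) {f : ℝ × ℝ → ℂ} (hf : ContDiff ℝ 2 f) (x y : ℝ) :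
    pdX (n0X c μ f) x y = -pdX (fun q => pdY f q.1 q.2) x y + c * n0Z μ f (x, y)
      + n0XPotential c μ x * pdX f x y := by
  have hasDeriv_pdY : HasDerivAt (fun t => pdY f t y) (pdX (fun q => pdY f q.1 q.2) x y) x :=
    (hasDerivAt_fst_of_differentiableAt
      (differentiable_pdY hf (x, y))).differentiableAt.hasDerivAt
  have hasDeriv_f : HasDerivAt (fun t => f (t, y)) (pdX f x y) x :=
    (hasDerivAt_fst_of_differentiableAt
      (hf.differentiable two_ne_zero (x, y))).differentiableAt.hasDerivAt
  calc pdX (n0X c μ f) x y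
      = -pdX (fun q => pdY f q.1 q.2) x y
          + (c * ((Real.pi : ℂ) * Complex.I * (x : ℂ) / (μ : ℂ)) * f (x, y)
            + n0XPotential c μ x * pdX f x y) :=
        (hasDeriv_pdY.neg.add ((hasDerivAt_n0XPotential c μ x).mul hasDeriv_f)).deriv
    _ = _ := by
        simp only [n0Z]
        ring

theorem pdY_n0Y (f : ℝ × ℝ → ℂ) (x y : ℝ) :
    pdY (n0Y f) x y = -pdY (fun q => pdX f q.1 q.2) x y :=
  deriv.fun_neg

theorem n0X_n0Y_sub_n0Y_n0X (c : ℕ) (μ : ℝ) {f : ℝ × ℝ → ℂ} (hf : ContDiff ℝ 2 f)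
    (q : ℝ × ℝ) : n0X c μ (n0Y f) q - n0Y (n0X c μ f) q = c * n0Z μ f q := by
  obtain ⟨x, y⟩ := q
  calc n0X c μ (n0Y f) (x, y) - n0Y (n0X c μ f) (x, y)
      = (-pdY (n0Y f) x y + n0XPotential c μ x * -pdX f x y) - -pdX (n0X c μ f) x y := rfl
    _ = c * n0Z μ f (x, y) := by
        rw [pdY_n0Y, pdX_n0X c μ hf, pdY_pdX_eq_pdX_pdY hf]
        ring

theorem curvature_XY (c : ℕ) (μ α : ℝ) {f : ℝ × ℝ → ℂ} (hf : ContDiff ℝ 2 f) (q : ℝ × ℝ) :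
    n0X c μ (n0Y f) q - n0Y (n0X c μ f) q - (c : ℂ) * opBZ μ α f q
      = (c : ℂ) * Complex.I * (Real.cos (α * Real.pi * q.1 / μ) : ℂ) * f q := by
  rw [n0X_n0Y_sub_n0Y_n0X c μ hf, opBZ]
  ring

theorem curvature_XZ (c : ℕ) (μ α : ℝ) (f : ℝ × ℝ → ℂ) (q : ℝ × ℝ) :
    n0X c μ (opBZ μ α f) q - opBZ μ α (n0X c μ f) q = 0 := by
  rw [opBZ_eq_mulFst, n0X_mulFst, sub_self]

theorem curvature_YZ (μ α : ℝ) {f : ℝ × ℝ → ℂ} {q : ℝ × ℝ}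
    (hf : DifferentiableAt ℝ (fun t => f (t, q.2)) q.1) :
    n0Y (opBZ μ α f) q - opBZ μ α (n0Y f) q
      = (-((Real.pi : ℂ) * Complex.I / (μ : ℂ))
          - Complex.I * ((α * Real.pi / μ : ℝ) : ℂ)
            * (Real.sin (α * Real.pi * q.1 / μ) : ℂ)) * f q := by
  rw [opBZ_eq_mulFst, n0Y_mulFst_sub_mulFst_n0Y (hasDerivAt_opBZSymbol μ α q.1) hf]
  ring

theorem isModuleFn_comp_fst {g : ℝ → ℂ} (hg : ContDiff ℝ (⊤ : ℕ∞) g)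
    (hg_supp : HasCompactSupport g) : IsModuleFn fun q => g q.1 :=
  ⟨hg.comp contDiff_fst, fun _ _ => rfl, tsupport g, hg_supp,
    fun _ _ hx => image_eq_zero_of_notMem_tsupport hx⟩

theorem exists_isModuleFn_apply_ne_zero (x y : ℝ) : ∃ f, IsModuleFn f ∧ f (x, y) ≠ 0 := by
  let bump : ContDiffBump x := default
  have bump_center : bump x = 1 := bump.eventuallyEq_one.eq_of_nhds
  refine ⟨fun q => (bump q.1 : ℂ), isModuleFn_comp_fst (g := fun t => (bump t : ℂ))
    (Complex.ofRealCLM.contDiff.comp bump.contDiff)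
    (bump.hasCompactSupport.comp_left Complex.ofReal_zero), ?_⟩
  simp [bump_center]

theorem IsModuleFn.contDiff_two {f : ℝ × ℝ → ℂ} (hf : IsModuleFn f) : ContDiff ℝ 2 f :=
  hf.1.of_le (WithTop.coe_le_coe.2 le_top)

theorem exists_curvature_XY_ne_zero {c : ℕ} (hc : 0 < c) (μ α : ℝ) :
    ∃ f : ℝ × ℝ → ℂ, IsModuleFn f ∧
      (fun q => n0X c μ (n0Y f) q - n0Y (n0X c μ f) q - (c : ℂ) * opBZ μ α f q)
        ≠ (0 : ℝ × ℝ → ℂ) := by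
  obtain ⟨f, hf, hf_zero⟩ := exists_isModuleFn_apply_ne_zero 0 0
  refine ⟨f, hf, Function.ne_iff.2 ⟨(0, 0), ?_⟩⟩
  simp only [curvature_XY c μ α hf.contDiff_two]
  simp [hc.ne', hf_zero]

theorem statement10_general (c : ℕ) (hc : 0 < c) (μ : ℝ) (_hμ : μ ≠ 0) (α : ℝ) :
    (∀ f : ℝ × ℝ → ℂ, ContDiff ℝ 2 f →
      (∀ q : ℝ × ℝ, n0X c μ (n0Y f) q - n0Y (n0X c μ f) q - (c : ℂ) * opBZ μ α f q
        = (c : ℂ) * Complex.I * (Real.cos (α * Real.pi * q.1 / μ) : ℂ) * f q) ∧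
      (∀ q : ℝ × ℝ, n0X c μ (opBZ μ α f) q - opBZ μ α (n0X c μ f) q = 0) ∧
      (∀ q : ℝ × ℝ, n0Y (opBZ μ α f) q - opBZ μ α (n0Y f) q
        = (-((Real.pi : ℂ) * Complex.I / (μ : ℂ))
            - Complex.I * ((α * Real.pi / μ : ℝ) : ℂ)
              * (Real.sin (α * Real.pi * q.1 / μ) : ℂ)) * f q)) ∧
    (∃ f : ℝ × ℝ → ℂ, IsModuleFn f ∧
      (fun q => n0X c μ (n0Y f) q - n0Y (n0X c μ f) q - (c : ℂ) * opBZ μ α f q)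
        ≠ (0 : ℝ × ℝ → ℂ)) := by
  refine ⟨fun f hf => ⟨curvature_XY c μ α hf, curvature_XZ c μ α f, fun q => curvature_YZ μ α ?_⟩,
    exists_curvature_XY_ne_zero hc μ α⟩
  exact (hasDerivAt_fst_of_differentiableAt (hf.differentiable two_ne_zero q)).differentiableAt

/-- Theorem `thm:min-but-nc`(a): with `B_X = ∇⁰_X`, `B_Y = ∇⁰_Y`, and
`B_Z f = ∇⁰_Z f − i·cos(απx/μ)·f` for `α ≠ 0`, one has
`(B_XB_Y − B_YB_X − c·B_Z) f = c·i·cos(απx/μ)·f`, `(B_XB_Z − B_ZB_X) f = 0`, and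
`(B_YB_Z − B_ZB_Y) f = (−πi/μ − i·(απ/μ)·sin(απx/μ))·f` for every module function `f`;
in particular the curvature operator `B_XB_Y − B_YB_X − c·B_Z` is nonzero. -/
theorem statement10 (c : ℕ) (hc : 0 < c) (μ ν : ℝ) (hμ : μ ≠ 0) (α : ℝ) (hα : α ≠ 0) :
    (∀ f : ℝ × ℝ → ℂ, IsModuleFn f →
      (∀ q : ℝ × ℝ, n0X c μ (n0Y f) q - n0Y (n0X c μ f) q - (c : ℂ) * opBZ μ α f q
        = (c : ℂ) * Complex.I * (Real.cos (α * Real.pi * q.1 / μ) : ℂ) * f q) ∧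
      (∀ q : ℝ × ℝ, n0X c μ (opBZ μ α f) q - opBZ μ α (n0X c μ f) q = 0) ∧
      (∀ q : ℝ × ℝ, n0Y (opBZ μ α f) q - opBZ μ α (n0Y f) q
        = (-((Real.pi : ℂ) * Complex.I / (μ : ℂ))
            - Complex.I * ((α * Real.pi / μ : ℝ) : ℂ)
              * (Real.sin (α * Real.pi * q.1 / μ) : ℂ)) * f q)) ∧
    (∃ f : ℝ × ℝ → ℂ, IsModuleFn f ∧
      (fun q => n0X c μ (n0Y f) q - n0Y (n0X c μ f) q - (c : ℂ) * opBZ μ α f q)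
        ≠ (0 : ℝ × ℝ → ℂ)) := by
  obtain ⟨curvature, nonzero⟩ := statement10_general c hc μ hμ α
  exact ⟨fun f hf => curvature f hf.contDiff_two, nonzero⟩

end
end
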